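/- Let G = (V,E) be a finite graph, k ≥ 1 an integer, and v ∈ V a vertex whose neighbourhood N(v) induces a clique in G and satisfies |N(v)| ≤ k − 2. Fix positive rates (p_u)_{u∈V}. Let 𝓛_V be the Glauber dynamics for proper k-vertex-colourings of G with these rates, and let 𝓛_{V∖{v}} be the Glauber dynamics for proper k-vertex-colourings of the graph G − v (G with v and its incident edges deleted) with the rates (p_u)_{u≠v}. If G − v has at least two proper k-vertex-colourings, then Gap(𝓛_V) ≤ Gap(𝓛_{V∖{v}}); equivalently, τ(𝓛_{V∖{v}}) ≤ τ(𝓛_V). -/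

import Mathlib

/-!
Restriction `res` of colourings from `G` to `G - v` has fibres of constant size `k - deg v`,
because the clique `N(v)` always uses exactly `deg v` colours. Hence the uniform distribution
projects to the uniform distribution, and a function `g` on colourings of `G - v` has the same
variance as its lift `g ∘ res`. A move at `u ≠ v` of the large chain projects to the same move, with
the same rate, of the small chain, while moves at `v` do not change the lift; so the Dirichlet form
does not increase under lifting (`sum_fiber_glauberOff_le`). Comparing Rayleigh quotients gives the
inequality of the gaps (`specGap_le_of_fiber`).

For relaxation times, `1 / 0 = 0` makes it necessary to show also that a positive gap of the small
chain forces a positive gap of the large one (`specGap_pos_of_lift`). A pair of states `a, b` is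
*controlled* if `(f a - f b)² ≤ C · 𝓔(f, f)` for all `f`. Controlled pairs form an equivalence
relation containing all transitions. Two colourings in one fibre differ only at `v`, so they are
controlled; and every move of the small chain lifts to a move of the large chain, because
`deg v + 1 < k` leaves a colour for `v` that avoids both `N(v)` and the new colour. Were not all
pairs controlled, the indicator of a class would descend to a nonconstant function on the small
chain with zero Dirichlet form.
-/


open Finset
open scoped Classical

section Markov

variable {Ω : Type*} [Fintype Ω]

/-- A generator matrix: nonnegative off-diagonal entries, zero row sums. -/
def IsGenerator (L : Ω → Ω → ℝ) : Prop :=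
  (∀ x y : Ω, x ≠ y → 0 ≤ L x y) ∧ (∀ x : Ω, ∑ y : Ω, L x y = 0)

/-- A transition of a generator matrix. -/
def IsTransition (L : Ω → Ω → ℝ) (x y : Ω) : Prop := x ≠ y ∧ 0 < L x y

/-- Ergodicity: the directed graph of transitions is strongly connected. -/
def IsErgodicGen (L : Ω → Ω → ℝ) : Prop :=
  ∀ x y : Ω, Relation.ReflTransGen (IsTransition L) x y

/-- Reversibility with respect to a distribution π. -/
def IsReversible (L : Ω → Ω → ℝ) (π : Ω → ℝ) : Prop :=
  ∀ x y : Ω, π x * L x y = π y * L y x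

/-- The variance form. -/
noncomputable def VarForm (π : Ω → ℝ) (f : Ω → ℝ) : ℝ :=
  (1 / 2) * ∑ a : Ω, ∑ b : Ω, π a * π b * (f a - f b) ^ 2

/-- The Dirichlet form. -/
noncomputable def DirForm (π : Ω → ℝ) (L : Ω → Ω → ℝ) (f : Ω → ℝ) : ℝ :=
  (1 / 2) * ∑ a : Ω, ∑ b : Ω, π a * L a b * (f a - f b) ^ 2

/-- The spectral gap: infimum (= minimum) of the Rayleigh quotient over nonconstant functions. -/
noncomputable def specGap (π : Ω → ℝ) (L : Ω → Ω → ℝ) : ℝ :=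
  sInf {r : ℝ | ∃ f : Ω → ℝ, (∃ a b : Ω, f a ≠ f b) ∧ r = DirForm π L f / VarForm π f}

/-- The relaxation time, with the convention that it equals 1 on a one-point space. -/
noncomputable def relaxTime (π : Ω → ℝ) (L : Ω → Ω → ℝ) : ℝ :=
  if ∃ a b : Ω, a ≠ b then 1 / specGap π L else 1

/-- The uniform distribution on a finite type. -/
noncomputable def unif (Ω : Type*) [Fintype Ω] : Ω → ℝ := fun _ => 1 / (Fintype.card Ω : ℝ)

end Markov

section Glauber

variable {I : Type*} [Fintype I] {k : ℕ} {S : Type*} [Fintype S] [DecidableEq S]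

/-- Off-diagonal entry of the Glauber dynamics: if the two states differ at exactly one site,
the rate of that site; otherwise `0`. -/
noncomputable def glauberOff (p : I → ℝ) (val : S → I → Fin k) (a b : S) : ℝ :=
  if (Finset.univ.filter fun w => val a w ≠ val b w).card = 1 then
    ∑ w ∈ Finset.univ.filter fun w => val a w ≠ val b w, p w
  else 0

/-- The Glauber dynamics generator with site rates `p`, on a state space `S` of configurations
(described by `val : S → I → Fin k`): off-diagonal entries are the rate of the unique differing
site, diagonal entries make row sums vanish. -/
noncomputable def glauber (p : I → ℝ) (val : S → I → Fin k) : S → S → ℝ :=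
  fun σ η =>
    if σ = η then -∑ η' ∈ Finset.univ.filter fun b => b ≠ σ, glauberOff p val σ η'
    else glauberOff p val σ η

end Glauber

/-- A proper `k`-vertex-colouring of a graph. -/
def ProperCol {V : Type*} (G : SimpleGraph V) {k : ℕ} (σ : V → Fin k) : Prop :=
  ∀ a b : V, G.Adj a b → σ a ≠ σ b

/-! ### Comparison of abstract chains -/

section Abstract

variable {Ω Ω' : Type*} [Fintype Ω] [Fintype Ω']

lemma unif_nonneg (a : Ω) : 0 ≤ unif Ω a := by
  unfold unif; positivity

lemma unif_pos (a : Ω) : 0 < unif Ω a := by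
  have : 0 < Fintype.card Ω := Fintype.card_pos_iff.mpr ⟨a⟩
  unfold unif; positivity

lemma dirTerm_nonneg {L : Ω → Ω → ℝ} (hL : ∀ a b, a ≠ b → 0 ≤ L a b) (f : Ω → ℝ) (a b : Ω) :
    0 ≤ unif Ω a * L a b * (f a - f b) ^ 2 := by
  by_cases h : a = b
  · simp [h]
  · exact mul_nonneg (mul_nonneg (unif_nonneg a) (hL a b h)) (sq_nonneg _)

lemma dirForm_nonneg {L : Ω → Ω → ℝ} (hL : ∀ a b, a ≠ b → 0 ≤ L a b) (f : Ω → ℝ) :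
    0 ≤ DirForm (unif Ω) L f := by
  unfold DirForm
  have := Finset.sum_nonneg (s := univ) fun a (_ : a ∈ univ) =>
    Finset.sum_nonneg (s := univ) fun b (_ : b ∈ univ) => dirTerm_nonneg hL f a b
  linarith

lemma dirTerm_le {L : Ω → Ω → ℝ} (hL : ∀ a b, a ≠ b → 0 ≤ L a b) (f : Ω → ℝ) (a b : Ω) :
    (1 / 2) * (unif Ω a * L a b * (f a - f b) ^ 2) ≤ DirForm (unif Ω) L f := by
  unfold DirForm
  have h1 := Finset.single_le_sum (f := fun b => unif Ω a * L a b * (f a - f b) ^ 2)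
    (fun b _ => dirTerm_nonneg hL f a b) (mem_univ b)
  have h2 := Finset.single_le_sum (f := fun a => ∑ b, unif Ω a * L a b * (f a - f b) ^ 2)
    (fun a _ => Finset.sum_nonneg fun b _ => dirTerm_nonneg hL f a b) (mem_univ a)
  linarith

lemma varForm_nonneg (f : Ω → ℝ) : 0 ≤ VarForm (unif Ω) f := by
  unfold VarForm
  have := Finset.sum_nonneg (s := univ) fun a (_ : a ∈ univ) =>
    Finset.sum_nonneg (s := univ) fun b (_ : b ∈ univ) =>
      mul_nonneg (mul_nonneg (unif_nonneg a) (unif_nonneg b)) (sq_nonneg (f a - f b))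
  linarith

lemma varForm_pos {f : Ω → ℝ} (hf : ∃ a b, f a ≠ f b) : 0 < VarForm (unif Ω) f := by
  obtain ⟨a, b, hab⟩ := hf
  have h0 : ∀ a b, 0 ≤ unif Ω a * unif Ω b * (f a - f b) ^ 2 := fun a b =>
    mul_nonneg (mul_nonneg (unif_nonneg a) (unif_nonneg b)) (sq_nonneg (f a - f b))
  have h1 := Finset.single_le_sum (f := fun b => unif Ω a * unif Ω b * (f a - f b) ^ 2)
    (fun b _ => h0 a b) (mem_univ b)
  have h2 := Finset.single_le_sum (f := fun a => ∑ b, unif Ω a * unif Ω b * (f a - f b) ^ 2)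
    (fun a _ => Finset.sum_nonneg fun b _ => h0 a b) (mem_univ a)
  have h3 : 0 < unif Ω a * unif Ω b * (f a - f b) ^ 2 :=
    mul_pos (mul_pos (unif_pos a) (unif_pos b)) (by
      have := sub_ne_zero.mpr hab
      positivity)
  unfold VarForm
  linarith

lemma specGap_nonneg {L : Ω → Ω → ℝ} (hL : ∀ a b, a ≠ b → 0 ≤ L a b) :
    0 ≤ specGap (unif Ω) L := by
  apply Real.sInf_nonneg
  rintro r ⟨f, -, rfl⟩
  exact div_nonneg (dirForm_nonneg hL f) (varForm_nonneg f)

lemma specGap_le {L : Ω → Ω → ℝ} (hL : ∀ a b, a ≠ b → 0 ≤ L a b) {f : Ω → ℝ}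
    (hf : ∃ a b, f a ≠ f b) :
    specGap (unif Ω) L ≤ DirForm (unif Ω) L f / VarForm (unif Ω) f := by
  apply csInf_le
  · refine ⟨0, ?_⟩
    rintro r ⟨f, -, rfl⟩
    exact div_nonneg (dirForm_nonneg hL f) (varForm_nonneg f)
  · exact ⟨f, hf, rfl⟩

lemma le_specGap {L : Ω → Ω → ℝ} {c : ℝ} (hΩ : ∃ a b : Ω, a ≠ b)
    (h : ∀ f : Ω → ℝ, (∃ a b, f a ≠ f b) →
      c ≤ DirForm (unif Ω) L f / VarForm (unif Ω) f) : c ≤ specGap (unif Ω) L := by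
  obtain ⟨a, b, hab⟩ := hΩ
  apply le_csInf
  · exact ⟨_, fun x => if x = a then 1 else 0, ⟨a, b, by simp [hab.symm]⟩, rfl⟩
  · rintro r ⟨f, hf, rfl⟩
    exact h f hf

lemma sum_comp_of_fiber [DecidableEq Ω'] {res : Ω → Ω'} {m : ℕ}
    (hm : ∀ a', (univ.filter fun a => res a = a').card = m) (h : Ω' → ℝ) :
    ∑ a, h (res a) = m * ∑ a', h a' := by
  rw [← Finset.sum_fiberwise univ res, Finset.mul_sum]
  refine Finset.sum_congr rfl fun a' _ => ?_
  rw [Finset.sum_congr rfl (g := fun _ => h a')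
    (fun a ha => by rw [(Finset.mem_filter.mp ha).2]), Finset.sum_const, hm, nsmul_eq_mul]

lemma card_of_fiber [DecidableEq Ω'] {res : Ω → Ω'} {m : ℕ}
    (hm : ∀ a', (univ.filter fun a => res a = a').card = m) :
    (Fintype.card Ω : ℝ) = m * Fintype.card Ω' := by
  have := sum_comp_of_fiber hm (fun _ => 1)
  simpa using this

lemma varForm_comp [DecidableEq Ω'] {res : Ω → Ω'} {m : ℕ} (hm0 : 0 < m)
    (hm : ∀ a', (univ.filter fun a => res a = a').card = m) (g : Ω' → ℝ) :
    VarForm (unif Ω) (fun a => g (res a)) = VarForm (unif Ω') g := by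
  have hm' : (m : ℝ) ≠ 0 := by positivity
  unfold VarForm unif
  simp only [← Finset.mul_sum]
  rw [card_of_fiber hm, Finset.sum_congr rfl fun a _ =>
    sum_comp_of_fiber hm (fun b' => (g (res a) - g b') ^ 2),
    sum_comp_of_fiber hm (fun a' => m * ∑ b', (g a' - g b') ^ 2), ← Finset.mul_sum]
  field_simp

lemma dirForm_comp_le [DecidableEq Ω'] {res : Ω → Ω'} {m : ℕ} (hm0 : 0 < m)
    (hm : ∀ a', (univ.filter fun a => res a = a').card = m)
    {L : Ω → Ω → ℝ} {L' : Ω' → Ω' → ℝ}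
    (hLL : ∀ a b', b' ≠ res a → ∑ b ∈ univ.filter (fun b => res b = b'), L a b ≤ L' (res a) b')
    (g : Ω' → ℝ) :
    DirForm (unif Ω) L (fun a => g (res a)) ≤ DirForm (unif Ω') L' g := by
  have hm' : (m : ℝ) ≠ 0 := by positivity
  have key : ∑ a, ∑ b, L a b * (g (res a) - g (res b)) ^ 2 ≤
      m * ∑ a', ∑ b', L' a' b' * (g a' - g b') ^ 2 := by
    rw [← sum_comp_of_fiber hm (fun a' => ∑ b', L' a' b' * (g a' - g b') ^ 2)]
    refine Finset.sum_le_sum fun a _ => ?_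
    rw [← Finset.sum_fiberwise univ res]
    refine Finset.sum_le_sum fun b' _ => ?_
    rw [Finset.sum_congr rfl (g := fun b => L a b * (g (res a) - g b') ^ 2)
      (fun b hb => by rw [(Finset.mem_filter.mp hb).2]), ← Finset.sum_mul]
    by_cases h : b' = res a
    · simp [h]
    · exact mul_le_mul_of_nonneg_right (hLL a b' h) (sq_nonneg _)
  unfold DirForm unif
  simp only [mul_assoc, ← Finset.mul_sum]
  rw [card_of_fiber hm]
  calc _ ≤ 1 / 2 * (1 / ((m : ℝ) * Fintype.card Ω') *
        (m * ∑ a', ∑ b', L' a' b' * (g a' - g b') ^ 2)) := by gcongr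
    _ = _ := by field_simp

/-- If `res` has fibres of constant size and the total rate from `a` into another fibre is at most
the corresponding rate of `L'`, then the gap of `L` is at most the gap of `L'`. -/
lemma specGap_le_of_fiber [DecidableEq Ω'] {res : Ω → Ω'} {m : ℕ} (hm0 : 0 < m)
    (hm : ∀ a', (univ.filter fun a => res a = a').card = m)
    {L : Ω → Ω → ℝ} {L' : Ω' → Ω' → ℝ} (hL : ∀ a b, a ≠ b → 0 ≤ L a b)
    (hLL : ∀ a b', b' ≠ res a → ∑ b ∈ univ.filter (fun b => res b = b'), L a b ≤ L' (res a) b')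
    (hsurj : Function.Surjective res) (hΩ' : ∃ a b : Ω', a ≠ b) :
    specGap (unif Ω) L ≤ specGap (unif Ω') L' := by
  refine le_specGap hΩ' fun g hg => ?_
  have hf : ∃ a b : Ω, g (res a) ≠ g (res b) := by
    obtain ⟨a', b', h⟩ := hg
    obtain ⟨a, rfl⟩ := hsurj a'
    obtain ⟨b, rfl⟩ := hsurj b'
    exact ⟨a, b, h⟩
  refine (specGap_le hL (f := fun a => g (res a)) hf).trans ?_
  rw [varForm_comp hm0 hm]
  exact div_le_div_of_nonneg_right (dirForm_comp_le hm0 hm hLL g) (varForm_nonneg g)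

/-- The pair `a, b` is controlled by the Dirichlet form of `L`: the squared increment of any
function along the pair is at most a constant multiple of its Dirichlet form. -/
def Controlled (L : Ω → Ω → ℝ) (a b : Ω) : Prop :=
  ∃ C : ℝ, 0 ≤ C ∧ ∀ f : Ω → ℝ, (f a - f b) ^ 2 ≤ C * DirForm (unif Ω) L f

lemma Controlled.refl (L : Ω → Ω → ℝ) (a : Ω) : Controlled L a a :=
  ⟨0, le_rfl, fun f => by simp⟩

lemma Controlled.symm {L : Ω → Ω → ℝ} {a b : Ω} (h : Controlled L a b) : Controlled L b a := by
  obtain ⟨C, hC, h⟩ := h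
  exact ⟨C, hC, fun f => by rw [← neg_sub, neg_sq]; exact h f⟩

lemma Controlled.trans {L : Ω → Ω → ℝ} {a b c : Ω} (h : Controlled L a b)
    (h' : Controlled L b c) : Controlled L a c := by
  obtain ⟨C, hC, h⟩ := h
  obtain ⟨D, hD, h'⟩ := h'
  refine ⟨2 * C + 2 * D, by positivity, fun f => ?_⟩
  nlinarith [h f, h' f, sq_nonneg ((f a - f b) - (f b - f c))]

lemma controlled_of_pos {L : Ω → Ω → ℝ} (hL : ∀ a b, a ≠ b → 0 ≤ L a b) {a b : Ω}
    (h : 0 < L a b) : Controlled L a b := by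
  have hpos : 0 < unif Ω a * L a b := mul_pos (unif_pos a) h
  refine ⟨2 / (unif Ω a * L a b), by positivity, fun f => ?_⟩
  have := dirTerm_le hL f a b
  rw [div_mul_eq_mul_div, le_div_iff₀ hpos]
  linarith

lemma specGap_pos_of_controlled {L : Ω → Ω → ℝ} (hL : ∀ a b, a ≠ b → 0 ≤ L a b)
    (hΩ : ∃ a b : Ω, a ≠ b) (h : ∀ a b, Controlled L a b) : 0 < specGap (unif Ω) L := by
  choose C hC hCf using h
  set K : ℝ := (1 / 2) * ∑ a, ∑ b, unif Ω a * unif Ω b * C a b with hK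
  have hK0 : 0 ≤ K := by
    have := Finset.sum_nonneg (s := univ) fun a (_ : a ∈ univ) =>
      Finset.sum_nonneg (s := univ) fun b (_ : b ∈ univ) =>
        mul_nonneg (mul_nonneg (unif_nonneg a) (unif_nonneg b)) (hC a b)
    linarith
  refine lt_of_lt_of_le (b := 1 / (K + 1)) (by positivity) (le_specGap hΩ fun f hf => ?_)
  have hV : VarForm (unif Ω) f ≤ K * DirForm (unif Ω) L f := by
    unfold VarForm
    rw [hK, mul_assoc, Finset.sum_mul]
    refine mul_le_mul_of_nonneg_left (Finset.sum_le_sum fun a _ => ?_) (by norm_num)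
    rw [Finset.sum_mul]
    refine Finset.sum_le_sum fun b _ => ?_
    rw [mul_assoc _ (C a b)]
    exact mul_le_mul_of_nonneg_left (hCf a b f) (mul_nonneg (unif_nonneg a) (unif_nonneg b))
  have hD := dirForm_nonneg hL f
  rw [div_le_div_iff₀ (by positivity) (varForm_pos hf)]
  linarith

/-- If fibres of `res` are controlled and every pair `a' ≠ b'` with nonzero rate in `L'` lifts to a
pair with positive rate in `L`, then positivity of the gap passes from `L'` to `L`. -/
lemma specGap_pos_of_lift {res : Ω → Ω'} {L : Ω → Ω → ℝ} {L' : Ω' → Ω' → ℝ}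
    (hL : ∀ a b, a ≠ b → 0 ≤ L a b) (hL' : ∀ a b, a ≠ b → 0 ≤ L' a b)
    (hΩ : ∃ a b : Ω, a ≠ b)
    (hfib : ∀ a b, res a = res b → Controlled L a b)
    (hlift : ∀ a' b', a' ≠ b' → L' a' b' ≠ 0 → ∃ a b, res a = a' ∧ res b = b' ∧ 0 < L a b)
    (hpos : 0 < specGap (unif Ω') L') : 0 < specGap (unif Ω) L := by
  refine specGap_pos_of_controlled hL hΩ fun a₀ b₀ => ?_
  by_contra hcon
  -- `g` is the projection of the indicator of the controlled class of `a₀`.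
  let g : Ω' → ℝ := fun x => if ∃ a, res a = x ∧ Controlled L a₀ a then 1 else 0
  have hg : ∀ a, g (res a) = if Controlled L a₀ a then 1 else 0 := by
    intro a
    have : (∃ c, res c = res a ∧ Controlled L a₀ c) ↔ Controlled L a₀ a :=
      ⟨fun ⟨c, hc, h⟩ => h.trans (hfib c a hc), fun h => ⟨a, rfl, h⟩⟩
    simp only [g, this]
  have hne : g (res a₀) ≠ g (res b₀) := by
    rw [hg, hg, if_pos (Controlled.refl L a₀), if_neg hcon]; norm_num
  have hD : DirForm (unif Ω') L' g = 0 := by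
    unfold DirForm
    rw [Finset.sum_eq_zero, mul_zero]
    intro a' _
    refine Finset.sum_eq_zero fun b' _ => ?_
    by_cases hab : a' = b'
    · simp [hab]
    by_cases h0 : L' a' b' = 0
    · simp [h0]
    obtain ⟨a, b, rfl, rfl, h⟩ := hlift a' b' hab h0
    have hc := controlled_of_pos hL h
    have : Controlled L a₀ a ↔ Controlled L a₀ b := ⟨fun h => h.trans hc, fun h => h.trans hc.symm⟩
    simp [hg, this]
  have := specGap_le hL' (f := g) ⟨_, _, hne⟩
  rw [hD, zero_div] at this
  linarith

end Abstract

/-! ### Glauber rates -/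

section GlauberRates

variable {I : Type*} [Fintype I] {k : ℕ} {S : Type*}

lemma glauberOff_eq {p : I → ℝ} {val : S → I → Fin k} {a b : S} (w : I)
    (hw : val a w ≠ val b w) (h : ∀ u, u ≠ w → val a u = val b u) : glauberOff p val a b = p w := by
  have : (Finset.univ.filter fun w => val a w ≠ val b w) = {w} := by
    ext u
    simp only [Finset.mem_filter, Finset.mem_univ, true_and, Finset.mem_singleton]
    exact ⟨fun hu => by_contra fun huw => hu (h u huw), fun hu => hu ▸ hw⟩
  simp [glauberOff, this]

lemma exists_of_glauberOff_ne_zero {p : I → ℝ} {val : S → I → Fin k} {a b : S}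
    (h : glauberOff p val a b ≠ 0) :
    ∃ w, val a w ≠ val b w ∧ ∀ u, u ≠ w → val a u = val b u := by
  unfold glauberOff at h
  split_ifs at h with hc
  · obtain ⟨w, hw⟩ := Finset.card_eq_one.mp hc
    have hmem : ∀ u, val a u ≠ val b u ↔ u = w := fun u => by
      simpa using Finset.ext_iff.mp hw u
    exact ⟨w, (hmem w).mpr rfl, fun u hu => by_contra fun h' => hu ((hmem u).mp h')⟩
  · exact absurd rfl h

lemma glauberOff_nonneg {p : I → ℝ} (hp : ∀ u, 0 < p u) (val : S → I → Fin k) (a b : S) :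
    0 ≤ glauberOff p val a b := by
  unfold glauberOff
  split_ifs
  · exact Finset.sum_nonneg fun w _ => (hp w).le
  · exact le_rfl

lemma glauber_of_ne [Fintype S] [DecidableEq S] (p : I → ℝ) (val : S → I → Fin k) {a b : S}
    (h : a ≠ b) : glauber p val a b = glauberOff p val a b := by
  simp [glauber, h]

lemma glauber_nonneg [Fintype S] [DecidableEq S] {p : I → ℝ} (hp : ∀ u, 0 < p u)
    (val : S → I → Fin k) (a b : S) (h : a ≠ b) : 0 ≤ glauber p val a b := by
  rw [glauber_of_ne p val h]; exact glauberOff_nonneg hp val a b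

end GlauberRates

/-! ### Deleting a vertex -/

section Colourings

variable {V : Type} (G : SimpleGraph V) (k : ℕ) (v : V)

/-- The proper `k`-colourings of `G`. -/
abbrev Col := {σ : V → Fin k // ProperCol G σ}

/-- The proper `k`-colourings of `G - v`. -/
abbrev ColDel := {σ : ↥{u : V | u ≠ v} → Fin k // ProperCol (G.induce {u : V | u ≠ v}) σ}

variable {G k v}

/-- Restriction of a colouring of `G` to `G - v`. -/
def resCol (σ : Col G k) : ColDel G k v :=
  ⟨fun u => σ.1 u.1, fun a b h => σ.2 a.1 b.1 h⟩

/-- The colour `c` is available at `v` given the colouring `τ` of `G - v`. -/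
def Avail (τ : ColDel G k v) (c : Fin k) : Prop :=
  ∀ u : ↥{u : V | u ≠ v}, G.Adj v u.1 → τ.1 u ≠ c

/-- The extension of a colouring of `G - v` by an available colour at `v`. -/
noncomputable def extCol (τ : ColDel G k v) (c : Fin k) (hc : Avail τ c) : Col G k :=
  ⟨fun w => if h : w = v then c else τ.1 ⟨w, h⟩, by
    intro a b hab
    by_cases ha : a = v
    · have hb : b ≠ v := fun hb => G.ne_of_adj hab (ha.trans hb.symm)
      simp only [ha, hb, dite_true, dite_false]
      exact (hc ⟨b, hb⟩ (ha ▸ hab)).symm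
    · by_cases hb : b = v
      · simp only [ha, hb, dite_true, dite_false]
        exact hc ⟨a, ha⟩ (hb ▸ hab.symm)
      · simp only [ha, hb, dite_false]
        exact τ.2 ⟨a, ha⟩ ⟨b, hb⟩ hab⟩

@[simp] lemma extCol_self (τ : ColDel G k v) (c : Fin k) (hc : Avail τ c) :
    (extCol τ c hc).1 v = c := by simp [extCol]

lemma extCol_of_ne (τ : ColDel G k v) (c : Fin k) (hc : Avail τ c) {w : V} (h : w ≠ v) :
    (extCol τ c hc).1 w = τ.1 ⟨w, h⟩ := by simp [extCol, h]

@[simp] lemma resCol_extCol (τ : ColDel G k v) (c : Fin k) (hc : Avail τ c) :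
    resCol (extCol τ c hc) = τ := by
  apply Subtype.ext
  funext u
  exact extCol_of_ne τ c hc u.2

lemma avail_resCol (σ : Col G k) : Avail (resCol σ : ColDel G k v) (σ.1 v) :=
  fun u hu => (σ.2 v u.1 hu).symm

lemma val_eq_of_resCol_eq {σ η : Col G k} (h : (resCol σ : ColDel G k v) = resCol η) {w : V}
    (hw : w ≠ v) : σ.1 w = η.1 w :=
  congrFun (congrArg Subtype.val h) (⟨w, hw⟩ : ↥{u : V | u ≠ v})

lemma col_ext {σ η : Col G k} (h : (resCol σ : ColDel G k v) = resCol η) (hv : σ.1 v = η.1 v) :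
    σ = η := by
  apply Subtype.ext
  funext w
  by_cases hw : w = v
  · rw [hw, hv]
  · exact val_eq_of_resCol_eq h hw

variable [Fintype V] [DecidableEq V]

/-- The total rate from `σ` into another fibre is at most the rate of the projected move: only the
element of the fibre with the same colour at `v` as `σ` can be reached. -/
lemma sum_fiber_glauberOff_le {p : V → ℝ} (hp : ∀ u, 0 < p u) (σ : Col G k) (τ : ColDel G k v)
    (hτ : τ ≠ resCol σ) :
    ∑ η ∈ univ.filter (fun η : Col G k => resCol η = τ),
        glauberOff p (fun σ : Col G k => σ.1) σ η ≤
      glauberOff (fun u : ↥{u : V | u ≠ v} => p u.1) (fun σ : ColDel G k v => σ.1) (resCol σ) τ := by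
  -- a transition from `σ` into the fibre over `τ` happens at a site other than `v`
  have hsite : ∀ η : Col G k, resCol η = τ → glauberOff p (fun σ : Col G k => σ.1) σ η ≠ 0 →
      ∃ w, w ≠ v ∧ σ.1 w ≠ η.1 w ∧ ∀ u, u ≠ w → σ.1 u = η.1 u := by
    intro η hη h
    obtain ⟨w, hw, hu⟩ := exists_of_glauberOff_ne_zero h
    refine ⟨w, ?_, hw, hu⟩
    rintro rfl
    apply hτ
    rw [← hη]
    apply Subtype.ext
    funext u
    exact (hu u.1 u.2).symm
  by_cases hex : ∃ η : Col G k, resCol η = τ ∧ glauberOff p (fun σ : Col G k => σ.1) σ η ≠ 0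
  · obtain ⟨η, hη, h⟩ := hex
    obtain ⟨w, hwv, hw, hu⟩ := hsite η hη h
    rw [Finset.sum_eq_single η]
    · rw [glauberOff_eq w hw hu, glauberOff_eq (⟨w, hwv⟩ : ↥{u : V | u ≠ v})]
      · subst hη
        exact hw
      · intro u huw
        subst hη
        exact hu u.1 fun h => huw (Subtype.ext h)
    · intro ξ hξ hne
      by_contra h'
      have hξ := (Finset.mem_filter.mp hξ).2
      obtain ⟨w', hwv', hw', hu'⟩ := hsite ξ hξ h'
      exact hne (col_ext (hξ.trans hη.symm) ((hu' v hwv'.symm).symm.trans (hu v hwv.symm)))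
    · intro h'
      simp [hη] at h'
  · push Not at hex
    rw [Finset.sum_eq_zero fun η hη => hex η (Finset.mem_filter.mp hη).2]
    exact glauberOff_nonneg (p := fun u : ↥{u : V | u ≠ v} => p u.1) (fun u => hp u.1) _ _ _

variable [DecidableRel G.Adj]

/-- The colours used by `τ` on the neighbourhood of `v`. -/
noncomputable def usedCols (τ : ColDel G k v) : Finset (Fin k) :=
  (univ.filter fun u : ↥{u : V | u ≠ v} => G.Adj v u.1).image τ.1

lemma avail_iff (τ : ColDel G k v) (c : Fin k) : Avail τ c ↔ c ∉ usedCols τ := by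
  simp only [Avail, usedCols, Finset.mem_image, Finset.mem_filter, Finset.mem_univ, true_and]
  push Not
  rfl

lemma card_nbrs : (univ.filter fun u : ↥{u : V | u ≠ v} => G.Adj v u.1).card = G.degree v := by
  rw [← SimpleGraph.card_neighborFinset_eq_degree]
  refine Finset.card_bij (fun u _ => u.1) ?_ ?_ ?_
  · intro u hu
    simpa using hu
  · intro a _ b _ h
    exact Subtype.ext h
  · intro b hb
    have hb' : G.Adj v b := by simpa using hb
    exact ⟨⟨b, (G.ne_of_adj hb').symm⟩, by simpa using hb', rfl⟩

lemma card_usedCols_le (τ : ColDel G k v) : (usedCols τ).card ≤ G.degree v :=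
  Finset.card_image_le.trans card_nbrs.le

/-- The clique hypothesis makes the colours on the neighbourhood of `v` distinct. -/
lemma card_usedCols (hclique : ∀ a b : V, G.Adj v a → G.Adj v b → a ≠ b → G.Adj a b)
    (τ : ColDel G k v) : (usedCols τ).card = G.degree v := by
  rw [usedCols, Finset.card_image_of_injOn, card_nbrs]
  intro a ha b hb hab
  by_contra hne
  simp only [Finset.coe_filter, Finset.mem_univ, true_and, Set.mem_ofPred_eq] at ha hb
  exact τ.2 a b (hclique a.1 b.1 ha hb fun h => hne (Subtype.ext h)) hab

lemma card_fiber (hclique : ∀ a b : V, G.Adj v a → G.Adj v b → a ≠ b → G.Adj a b)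
    (τ : ColDel G k v) :
    (univ.filter fun σ : Col G k => resCol σ = τ).card = k - G.degree v := by
  have h : (usedCols τ)ᶜ.card = k - G.degree v := by
    rw [Finset.card_compl, Fintype.card_fin, card_usedCols hclique]
  rw [← h]
  refine Finset.card_bij (fun σ _ => σ.1 v) ?_ ?_ ?_
  · intro σ hσ
    rw [Finset.mem_compl, ← avail_iff, ← (Finset.mem_filter.mp hσ).2]
    exact avail_resCol σ
  · intro σ hσ η hη hv
    exact col_ext ((Finset.mem_filter.mp hσ).2.trans (Finset.mem_filter.mp hη).2.symm) hv
  · intro c hc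
    rw [Finset.mem_compl, ← avail_iff] at hc
    exact ⟨extCol τ c hc, by simp, by simp⟩

/-- Every move of the chain on `G - v` lifts to a move of the chain on `G`. -/
lemma exists_lift (hdeg : G.degree v + 2 ≤ k) {p : V → ℝ} (hp : ∀ u, 0 < p u)
    (τ τ' : ColDel G k v)
    (h : glauberOff (fun u : ↥{u : V | u ≠ v} => p u.1) (fun σ : ColDel G k v => σ.1) τ τ' ≠ 0) :
    ∃ σ η : Col G k, resCol σ = τ ∧ resCol η = τ' ∧ σ ≠ η ∧
      0 < glauberOff p (fun σ : Col G k => σ.1) σ η := by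
  obtain ⟨w, hw, hu⟩ := exists_of_glauberOff_ne_zero h
  -- a colour at `v` that is compatible with the neighbourhood before and after the move at `w`
  obtain ⟨c, hc⟩ : ∃ c, c ∉ insert (τ'.1 w) (usedCols τ) := by
    by_contra! hall
    have h1 := Finset.card_insert_le (τ'.1 w) (usedCols τ)
    rw [Finset.eq_univ_of_forall hall, Finset.card_univ, Fintype.card_fin] at h1
    have := card_usedCols_le τ
    omega
  rw [Finset.mem_insert, not_or, ← avail_iff] at hc
  have hc' : Avail τ' c := by
    intro u hadj
    by_cases huw : u = w
    · rw [huw]; exact fun h => hc.1 h.symm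
    · rw [← hu u huw]; exact hc.2 u hadj
  have hne : (extCol τ c hc.2).1 w.1 ≠ (extCol τ' c hc').1 w.1 := by
    rw [extCol_of_ne _ _ _ w.2, extCol_of_ne _ _ _ w.2]
    exact hw
  refine ⟨extCol τ c hc.2, extCol τ' c hc', by simp, by simp, fun h => hne (by rw [h]), ?_⟩
  rw [glauberOff_eq w.1 hne]
  · exact hp _
  · intro u huw
    by_cases huv : u = v
    · subst huv; simp
    · simp only [extCol_of_ne _ _ _ huv]
      exact hu ⟨u, huv⟩ fun h => huw (congrArg Subtype.val h)

lemma resCol_surjective (hdeg : G.degree v + 2 ≤ k) :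
    Function.Surjective (resCol : Col G k → ColDel G k v) := by
  intro τ
  obtain ⟨c, hc⟩ : ∃ c, c ∉ usedCols τ := by
    by_contra! hall
    have := card_usedCols_le τ
    rw [Finset.eq_univ_of_forall hall, Finset.card_univ, Fintype.card_fin] at this
    omega
  exact ⟨extCol τ c ((avail_iff τ c).mpr hc), by simp⟩

end Colourings

/-- monotonicity of Glauber dynamics: if the neighbourhood of `v` induces a
clique of size at most `k - 2`, then removing `v` does not increase the relaxation time:
`Gap(𝓛_V) ≤ Gap(𝓛_{V∖{v}})`, equivalently `τ(𝓛_{V∖{v}}) ≤ τ(𝓛_V)`. -/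
theorem glauber_monotone
    {V : Type} [Fintype V] [DecidableEq V] (G : SimpleGraph V) [DecidableRel G.Adj]
    (k : ℕ) (v : V)
    (hclique : ∀ a b : V, G.Adj v a → G.Adj v b → a ≠ b → G.Adj a b)
    (hdeg : G.degree v + 2 ≤ k)
    (p : V → ℝ) (hp : ∀ u, 0 < p u)
    (h2 : 2 ≤ Fintype.card
      {σ : ↥{u : V | u ≠ v} → Fin k // ProperCol (G.induce {u : V | u ≠ v}) σ}) :
    specGap (unif {σ : V → Fin k // ProperCol G σ})
        (glauber p (fun σ : {σ : V → Fin k // ProperCol G σ} => σ.1)) ≤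
      specGap (unif {σ : ↥{u : V | u ≠ v} → Fin k // ProperCol (G.induce {u : V | u ≠ v}) σ})
        (glauber (fun u : ↥{u : V | u ≠ v} => p u.1)
          (fun σ : {σ : ↥{u : V | u ≠ v} → Fin k //
            ProperCol (G.induce {u : V | u ≠ v}) σ} => σ.1)) ∧
    relaxTime (unif {σ : ↥{u : V | u ≠ v} → Fin k // ProperCol (G.induce {u : V | u ≠ v}) σ})
        (glauber (fun u : ↥{u : V | u ≠ v} => p u.1)
          (fun σ : {σ : ↥{u : V | u ≠ v} → Fin k //
            ProperCol (G.induce {u : V | u ≠ v}) σ} => σ.1)) ≤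
      relaxTime (unif {σ : V → Fin k // ProperCol G σ})
        (glauber p (fun σ : {σ : V → Fin k // ProperCol G σ} => σ.1)) := by
  have hΩ' : ∃ a b : ColDel G k v, a ≠ b := Fintype.one_lt_card_iff.mp h2
  have hsurj := resCol_surjective (v := v) hdeg
  have hΩ : ∃ a b : Col G k, a ≠ b := by
    obtain ⟨a', b', h⟩ := hΩ'
    obtain ⟨a, rfl⟩ := hsurj a'
    obtain ⟨b, rfl⟩ := hsurj b'
    exact ⟨a, b, fun hab => h (by rw [hab])⟩
  have hL := glauber_nonneg hp (fun σ : Col G k => σ.1)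
  have hL' := glauber_nonneg (p := fun u : ↥{u : V | u ≠ v} => p u.1) (fun u => hp u.1)
    (fun σ : ColDel G k v => σ.1)
  have hgap : specGap (unif (Col G k)) (glauber p (fun σ : Col G k => σ.1)) ≤
      specGap (unif (ColDel G k v))
        (glauber (fun u : ↥{u : V | u ≠ v} => p u.1) (fun σ : ColDel G k v => σ.1)) := by
    refine specGap_le_of_fiber (res := resCol) (m := k - G.degree v) (by omega)
      (fun τ => card_fiber hclique τ) hL ?_ hsurj hΩ'
    intro σ τ hτ
    rw [glauber_of_ne _ _ hτ.symm]
    refine le_trans (le_of_eq (Finset.sum_congr rfl fun η hη => ?_))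
      (sum_fiber_glauberOff_le hp σ τ hτ)
    refine glauber_of_ne _ _ fun h => hτ ?_
    rw [h, (Finset.mem_filter.mp hη).2]
  refine ⟨hgap, ?_⟩
  unfold relaxTime
  rw [if_pos hΩ, if_pos hΩ']
  rcases (specGap_nonneg hL).lt_or_eq with hpos | hzero
  · exact one_div_le_one_div_of_le hpos hgap
  -- Both sides are `1 / 0`: a zero gap for `G` forces a zero gap for `G - v`.
  rcases (specGap_nonneg hL').lt_or_eq with hpos' | hzero'
  · refine absurd hzero (ne_of_lt ?_)
    refine specGap_pos_of_lift (res := resCol) hL hL' hΩ ?_ ?_ hpos'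
    · intro σ η h
      by_cases hv : σ.1 v = η.1 v
      · rw [col_ext h hv]; exact Controlled.refl _ _
      · refine controlled_of_pos hL ?_
        rw [glauber_of_ne _ _ fun h => hv (by rw [h]),
          glauberOff_eq v hv fun u hu => val_eq_of_resCol_eq h hu]
        exact hp v
    · intro τ τ' hne h0
      rw [glauber_of_ne _ _ hne] at h0
      obtain ⟨σ, η, hσ, hη, hση, h⟩ := exists_lift hdeg hp τ τ' h0
      exact ⟨σ, η, hσ, hη, by rwa [glauber_of_ne _ _ hση]⟩
  · rw [← hzero, ← hzero']
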